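/- arXiv:1307.2310 — 3 statements merged into one kernel-verified Lean document; each statement's English description precedes it below -/
import Mathlib

section
/- Let G be a group and ρ : G → SL(2,ℂ) a group homomorphism that is purely loxodromic, i.e. ρ(g) is loxodromic for every g ≠ 1. Then for any γ, η ∈ G with γη ≠ ηγ, there is no nonzero vector v ∈ ℂ² that is simultaneously an eigenvector of ρ(γ) and an eigenvector of ρ(η). (Equivalently, the Möbius transformations determined by ρ(γ) and ρ(η) have no common fixed point on the Riemann sphere, i.e. the axes of these loxodromic elements share no endpoint.) -/
/-! The commutator `κ = γ η (η γ)⁻¹` is nontrivial, so `ρ κ` must be loxodromic. On a common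
eigenvector `v` the matrices `ρ γ` and `ρ η` act by scalars, hence their two products agree on `v`,
and `ρ κ` fixes the nonzero vector `ρ (η γ) v`. A matrix of `SL(2,ℂ)` with eigenvalue `1` has
trace `2` (`trace_eq_two_of_mulVec_eq`), so it is not loxodromic. -/

/-- An element of `SL(2,ℂ)` is loxodromic if the square of its trace is not of the
form `Complex.ofReal t` with `t ∈ [0,4]`. -/
def IsLoxodromic (A : Matrix.SpecialLinearGroup (Fin 2) ℂ) : Prop :=
  Matrix.trace (A : Matrix (Fin 2) (Fin 2) ℂ) ^ 2 ∉
    {z : ℂ | ∃ t : ℝ, t ∈ Set.Icc (0 : ℝ) 4 ∧ z = (t : ℂ)}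

/-- A nonzero vector `v ∈ ℂ²` is an eigenvector of a matrix `A` if `A·v = a·v`
for some scalar `a`. -/
def IsEigenvector (A : Matrix (Fin 2) (Fin 2) ℂ) (v : Fin 2 → ℂ) : Prop :=
  v ≠ 0 ∧ ∃ a : ℂ, A.mulVec v = a • v

/-- The characteristic polynomial `X² - (tr A) X + 1` vanishes at the eigenvalue `1`. -/
theorem trace_eq_two_of_mulVec_eq (A : Matrix.SpecialLinearGroup (Fin 2) ℂ) (u : Fin 2 → ℂ)
    (hu : u ≠ 0) (h : (A : Matrix (Fin 2) (Fin 2) ℂ).mulVec u = u) :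
    Matrix.trace (A : Matrix (Fin 2) (Fin 2) ℂ) = 2 := by
  have hdet : ((A : Matrix (Fin 2) (Fin 2) ℂ) - 1).det = 0 :=
    Matrix.exists_mulVec_eq_zero_iff.mp ⟨u, hu, by rw [Matrix.sub_mulVec, h, Matrix.one_mulVec,
      sub_self]⟩
  have hA := A.det_coe
  rw [Matrix.det_fin_two] at hdet hA
  simp at hdet
  rw [Matrix.trace_fin_two]
  linear_combination hA - hdet

/-- If `ρ : G → SL(2,ℂ)` is purely loxodromic, then the images of two non-commuting
elements have no common eigenvector (equivalently, the corresponding Möbius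
transformations share no fixed point on the Riemann sphere). -/
theorem purelyLoxodromic_noncommuting_no_common_eigenvector
    {G : Type*} [Group G] (ρ : G →* Matrix.SpecialLinearGroup (Fin 2) ℂ)
    (hρ : ∀ g : G, g ≠ 1 → IsLoxodromic (ρ g))
    (γ η : G) (h : γ * η ≠ η * γ) :
    ¬ ∃ v : Fin 2 → ℂ,
        IsEigenvector ((ρ γ : Matrix.SpecialLinearGroup (Fin 2) ℂ) : Matrix (Fin 2) (Fin 2) ℂ) v ∧
        IsEigenvector ((ρ η : Matrix.SpecialLinearGroup (Fin 2) ℂ) : Matrix (Fin 2) (Fin 2) ℂ) v := by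
  rintro ⟨v, ⟨hv, a, ha⟩, -, b, hb⟩
  have hκ : γ * η * (η * γ)⁻¹ ≠ 1 := fun hc => h (mul_inv_eq_one.mp hc)
  have hprod : (ρ (γ * η) : Matrix (Fin 2) (Fin 2) ℂ).mulVec v =
      (ρ (η * γ) : Matrix (Fin 2) (Fin 2) ℂ).mulVec v := by
    simp only [map_mul, Matrix.SpecialLinearGroup.coe_mul, ← Matrix.mulVec_mulVec, ha, hb,
      Matrix.mulVec_smul]
    exact smul_comm b a v
  have hne : (ρ (η * γ) : Matrix (Fin 2) (Fin 2) ℂ).mulVec v ≠ 0 := fun h0 => by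
    have hdet := Matrix.exists_mulVec_eq_zero_iff.mp ⟨v, hv, h0⟩
    exact one_ne_zero ((ρ (η * γ)).det_coe.symm.trans hdet)
  have hfix : (ρ (γ * η * (η * γ)⁻¹) : Matrix (Fin 2) (Fin 2) ℂ).mulVec
      ((ρ (η * γ) : Matrix (Fin 2) (Fin 2) ℂ).mulVec v) =
      (ρ (η * γ) : Matrix (Fin 2) (Fin 2) ℂ).mulVec v := by
    rw [Matrix.mulVec_mulVec, ← Matrix.SpecialLinearGroup.coe_mul, ← map_mul,
      inv_mul_cancel_right, hprod]
  refine hρ _ hκ ⟨4, by norm_num, ?_⟩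
  rw [trace_eq_two_of_mulVec_eq _ _ hne hfix]
  norm_num
end

section
/- Let X ⊆ ℂ be a nonempty compact set and let (c,r) be its minimal enclosing ball. Then the center c lies in the convex hull (over ℝ) of X ∩ sphere(c,r), the set of points of X lying on the boundary circle of the minimal enclosing ball; in particular, X meets the boundary circle of its minimal enclosing ball. -/
/-!
If the center `c` were not in the convex hull of the contact set `S = X ∩ sphere c r`, then, this
hull being compact (by Carathéodory's theorem), Hahn–Banach would provide a direction `v`
with `⟪v, x - c⟫ > 0` for all `x ∈ S`. Moving the center slightly in the direction `v` brings it
closer to the points of `X` near `S`, while the remaining points of `X` were at distance `< r` by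
a uniform margin. So `X` would fit in a ball of radius `< r`, contradicting minimality.
-/

/-- `(c, r)` is a minimal enclosing ball of `X ⊆ ℂ` if `X` is contained in the closed
ball of center `c` and radius `r`, and `r` is minimal among radii of closed balls
containing `X`. -/
def IsMinimalEnclosingBall (X : Set ℂ) (c : ℂ) (r : ℝ) : Prop :=
  X ⊆ Metric.closedBall c r ∧
    ∀ (c' : ℂ) (r' : ℝ), X ⊆ Metric.closedBall c' r' → r ≤ r'

/-- By Carathéodory's theorem the hull is the union, over `k ≤ dim E + 1`, of the images of the
compact sets `stdSimplex ℝ (Fin k) × S ^ k` under the barycenter map. -/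
lemma isCompact_convexHull_of_finiteDimensional {E : Type*} [NormedAddCommGroup E]
    [NormedSpace ℝ E] [FiniteDimensional ℝ E] {S : Set E} (hS : IsCompact S) :
    IsCompact (convexHull ℝ S) := by
  have key : convexHull ℝ S = ⋃ k : Fin (Module.finrank ℝ E + 2),
      (fun p : (Fin k → ℝ) × (Fin k → E) => ∑ i, p.1 i • p.2 i) ''
        (stdSimplex ℝ (Fin k) ×ˢ Set.univ.pi fun _ => S) := by
    apply Set.Subset.antisymm
    · intro x hx
      obtain ⟨ι, _, z, w, hz, hind, hw, hw1, rfl⟩ := eq_pos_convex_span_of_mem_convexHull hx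
      have hcard : Fintype.card ι ≤ Module.finrank ℝ E + 1 :=
        hind.card_le_finrank_succ.trans (Nat.succ_le_succ (Submodule.finrank_le _))
      let e := Fintype.equivFin ι
      refine Set.mem_iUnion.2 ⟨⟨Fintype.card ι, by omega⟩, (w ∘ e.symm, z ∘ e.symm),
        ⟨⟨fun i => (hw _).le, ?_⟩, fun i _ => hz ⟨_, rfl⟩⟩, ?_⟩
      · exact (e.symm.sum_comp w).trans hw1
      · exact e.symm.sum_comp fun i => w i • z i
    · refine Set.iUnion_subset fun k => ?_
      rintro _ ⟨⟨w, z⟩, ⟨⟨hw, hw1⟩, hz⟩, rfl⟩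
      exact (convex_convexHull ℝ S).sum_mem (fun i _ => hw i) hw1
        fun i _ => subset_convexHull ℝ S (hz i trivial)
  rw [key]
  refine isCompact_iUnion fun k => IsCompact.image ?_ (by fun_prop)
  exact (isCompact_stdSimplex ℝ _).prod (isCompact_univ_pi fun _ => hS)

/-- The center of the minimal enclosing ball of a nonempty compact set `X ⊆ ℂ` lies
in the convex hull of the points of `X` on the boundary circle; in particular `X`
meets the boundary circle. -/
theorem center_mem_convexHull_boundary_points (X : Set ℂ)
    (hne : X.Nonempty) (hX : IsCompact X) (c : ℂ) (r : ℝ)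
    (h : IsMinimalEnclosingBall X c r) :
    c ∈ convexHull ℝ (X ∩ Metric.sphere c r) ∧ (X ∩ Metric.sphere c r).Nonempty := by
  suffices hc : c ∈ convexHull ℝ (X ∩ Metric.sphere c r) from
    ⟨hc, convexHull_nonempty_iff.1 ⟨c, hc⟩⟩
  obtain ⟨hsub, hmin⟩ := h
  by_contra hc
  have hle : ∀ x ∈ X, ‖x - c‖ ≤ r := fun x hx => by
    simpa [dist_eq_norm] using hsub hx
  have hr : 0 ≤ r := (norm_nonneg _).trans (hle _ hne.some_mem)
  have hclosed : IsClosed (convexHull ℝ (X ∩ Metric.sphere c r)) :=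
    (isCompact_convexHull_of_finiteDimensional
      (hX.inter_right Metric.isClosed_sphere)).isClosed
  obtain ⟨f, u, hfc, hfu⟩ :=
    geometric_hahn_banach_point_closed (convex_convexHull ℝ _) hclosed hc
  obtain ⟨v, rfl⟩ := (InnerProductSpace.toDual ℝ ℂ).surjective f
  simp only [InnerProductSpace.toDual_apply_apply] at hfc hfu
  -- Each `x ∈ X` is either strictly on the side of `v` or strictly inside the ball,
  -- and compactness of `X` gives a uniform margin `ε`.
  obtain ⟨ε, hε, hmargin⟩ : ∃ ε > 0, ∀ x ∈ X,
      ε ≤ max (inner ℝ v (x - c)) (r ^ 2 - ‖x - c‖ ^ 2) := by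
    obtain ⟨x₀, hx₀, hx₀min⟩ := hX.exists_isMinOn hne
      (f := fun x => max (inner ℝ v (x - c)) (r ^ 2 - ‖x - c‖ ^ 2))
      (by fun_prop)
    refine ⟨_, ?_, fun x hx => hx₀min hx⟩
    rcases (hle x₀ hx₀).lt_or_eq with hlt | heq
    · refine lt_max_of_lt_right ?_
      nlinarith [norm_nonneg (x₀ - c)]
    · refine lt_max_of_lt_left ?_
      have := hfu x₀ (subset_convexHull ℝ _ ⟨hx₀, by simpa [dist_eq_norm] using heq⟩)
      rw [inner_sub_right]
      linarith
  obtain ⟨t, ht0, ht1, htε⟩ : ∃ t : ℝ, 0 < t ∧ t ≤ 1 ∧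
      t * (2 * r * ‖v‖ + ‖v‖ ^ 2 + 1) ≤ ε := by
    have hB : 0 < 2 * r * ‖v‖ + ‖v‖ ^ 2 + 1 := by positivity
    exact ⟨min 1 (ε / (2 * r * ‖v‖ + ‖v‖ ^ 2 + 1)), lt_min one_pos (div_pos hε hB),
      min_le_left _ _, (le_div_iff₀ hB).1 (min_le_right _ _)⟩
  have hlt : ∀ x ∈ X, dist x (c + t • v) < r := by
    intro x hx
    have hexp : ‖x - (c + t • v)‖ ^ 2 =
        ‖x - c‖ ^ 2 - 2 * t * inner ℝ v (x - c) + t ^ 2 * ‖v‖ ^ 2 := by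
      rw [← sub_sub, norm_sub_sq_real, real_inner_smul_right, real_inner_comm, norm_smul,
        mul_pow, Real.norm_eq_abs, sq_abs]
      ring
    have hcs : -(‖v‖ * r) ≤ inner ℝ v (x - c) :=
      (neg_le_neg (mul_le_mul_of_nonneg_left (hle x hx) (norm_nonneg v))).trans
        (neg_le_of_abs_le (abs_real_inner_le_norm v (x - c)))
    have hsq : ‖x - c‖ ^ 2 ≤ r ^ 2 := pow_le_pow_left₀ (norm_nonneg _) (hle x hx) 2
    have hrv : 0 ≤ r * ‖v‖ := by positivity
    rw [dist_eq_norm]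
    refine lt_of_pow_lt_pow_left₀ 2 hr ?_
    rw [hexp]
    rcases le_max_iff.1 (hmargin x hx) with h1 | h1
    · have h2 : t * ε ≤ t * inner ℝ v (x - c) := mul_le_mul_of_nonneg_left h1 ht0.le
      have h3 : t * (t * ‖v‖ ^ 2) ≤ t * ε :=
        mul_le_mul_of_nonneg_left (by nlinarith) ht0.le
      nlinarith [mul_pos ht0 hε]
    · have h2 : t * -(‖v‖ * r) ≤ t * inner ℝ v (x - c) := mul_le_mul_of_nonneg_left hcs ht0.le
      have h3 : t ^ 2 * ‖v‖ ^ 2 ≤ t * ‖v‖ ^ 2 :=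
        mul_le_mul_of_nonneg_right (by nlinarith) (sq_nonneg _)
      nlinarith
  -- The largest distance from the new center is attained, hence is `< r`.
  obtain ⟨x₁, hx₁, hmax⟩ := hX.exists_isMaxOn hne
    (f := fun x => dist x (c + t • v)) (by fun_prop)
  exact (hmin (c + t • v) _ fun x hx => Metric.mem_closedBall.2 (hmax hx)).not_gt (hlt x₁ hx₁)
end

section
/- Let X ⊆ ℂ be a nonempty compact set with minimal enclosing ball (c,r). For every ε > 0 there exists δ > 0 such that for every nonempty compact set Y ⊆ ℂ whose Hausdorff distance to X is less than δ, the minimal enclosing ball (c′,r′) of Y satisfies |c − c′| < ε and |r − r′| < ε. That is, the minimal enclosing ball depends continuously on the compact set in the Hausdorff metric. -/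
theorem subset_closedBall_add_of_hausdorffDist_lt {X Y : Set ℂ} {δ : ℝ} (hX : X.Nonempty)
    (hY : Y.Nonempty) (hXc : IsCompact X) (hYc : IsCompact Y)
    (hd : Metric.hausdorffDist X Y < δ) {c : ℂ} {r : ℝ} (h : Y ⊆ Metric.closedBall c r) :
    X ⊆ Metric.closedBall c (r + δ) := by
  intro x hx
  obtain ⟨y, hy, hxy⟩ := Metric.exists_dist_lt_of_hausdorffDist_lt hx hd
    (Metric.hausdorffEDist_ne_top_of_nonempty_of_bounded hX hY hXc.isBounded hYc.isBounded)
  have h1 : dist y c ≤ r := h hy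
  have h2 := dist_triangle x y c
  exact Metric.mem_closedBall.2 (by linarith)

/-- The stability form of uniqueness: an enclosing ball of nearly minimal radius has its center
close to the minimal one. -/
theorem IsMinimalEnclosingBall.dist_sq_le {X : Set ℂ} {c : ℂ} {r : ℝ} (hne : X.Nonempty)
    (h : IsMinimalEnclosingBall X c r) {c' : ℂ} {R : ℝ} (hR : X ⊆ Metric.closedBall c' R) :
    dist c c' ^ 2 ≤ 2 * (R ^ 2 - r ^ 2) := by
  have key : ∀ x ∈ X, dist x ((c + c') / 2) ^ 2 ≤ (r ^ 2 + R ^ 2) / 2 - dist c c' ^ 2 / 4 := by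
    intro x hx
    have h1 : dist x c ^ 2 ≤ r ^ 2 := pow_le_pow_left₀ dist_nonneg (h.1 hx) 2
    have h2 : dist x c' ^ 2 ≤ R ^ 2 := pow_le_pow_left₀ dist_nonneg (hR hx) 2
    -- Apollonius' identity for the median from `x` to the midpoint of `c` and `c'`.
    have h3 : dist x ((c + c') / 2) ^ 2
        = (dist x c ^ 2 + dist x c' ^ 2) / 2 - dist c c' ^ 2 / 4 := by
      have hm : (c + c') / 2 = (((1 / 2 : ℝ) : ℂ)) * (c + c') := by push_cast; ring
      simp only [Complex.dist_eq, Complex.sq_norm, Complex.normSq_apply, hm, Complex.sub_re,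
        Complex.sub_im, Complex.re_ofReal_mul, Complex.im_ofReal_mul, Complex.add_re,
        Complex.add_im]
      ring
    linarith
  obtain ⟨x, hx⟩ := hne
  have hs := (sq_nonneg _).trans (key x hx)
  have hr0 : 0 ≤ r := dist_nonneg.trans (h.1 hx)
  have hle := h.2 _ _ fun y hy => Metric.mem_closedBall.2 (Real.le_sqrt_of_sq_le (key y hy))
  have := (Real.le_sqrt hr0 hs).1 hle
  linarith

/-- The minimal enclosing ball depends continuously on the compact set in the
Hausdorff metric. -/
theorem minimal_enclosing_ball_continuous (X : Set ℂ)
    (hne : X.Nonempty) (hX : IsCompact X) (c : ℂ) (r : ℝ)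
    (h : IsMinimalEnclosingBall X c r) :
    ∀ ε > 0, ∃ δ > 0, ∀ Y : Set ℂ, Y.Nonempty → IsCompact Y →
      Metric.hausdorffDist X Y < δ →
      ∀ (c' : ℂ) (r' : ℝ), IsMinimalEnclosingBall Y c' r' →
        dist c c' < ε ∧ |r - r'| < ε := by
  intro ε hε
  have hr0 : 0 ≤ r := by
    obtain ⟨x, hx⟩ := hne
    exact dist_nonneg.trans (h.1 hx)
  -- It suffices that `δ ≤ 1`, `δ < ε` and `8 δ (r + 1) < ε²`.
  obtain ⟨δ, hδ, hδ1, hδε, hδr⟩ : ∃ δ : ℝ, 0 < δ ∧ δ ≤ 1 ∧ δ < ε ∧ 8 * δ * (r + 1) < ε ^ 2 := by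
    refine ⟨min 1 (min (ε / 2) (ε ^ 2 / (16 * (r + 1)))), by positivity, min_le_left _ _, ?_, ?_⟩
    · have := (min_le_right 1 (min (ε / 2) (ε ^ 2 / (16 * (r + 1))))).trans (min_le_left _ _)
      linarith
    · have := (min_le_right 1 (min (ε / 2) (ε ^ 2 / (16 * (r + 1))))).trans (min_le_right _ _)
      rw [le_div_iff₀ (by positivity)] at this
      nlinarith [pow_pos hε 2]
  refine ⟨δ, hδ, fun Y hYne hY hd c' r' h' => ?_⟩
  have hXsub := subset_closedBall_add_of_hausdorffDist_lt hne hYne hX hY hd h'.1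
  have hYsub := subset_closedBall_add_of_hausdorffDist_lt hYne hne hY hX
    (by rwa [Metric.hausdorffDist_comm]) h.1
  have h1 := h.2 _ _ hXsub
  have h2 := h'.2 _ _ hYsub
  refine ⟨?_, abs_lt.2 ⟨by linarith, by linarith⟩⟩
  have h3 := h.dist_sq_le hne
    (hXsub.trans (Metric.closedBall_subset_closedBall (show r' + δ ≤ r + 2 * δ by linarith)))
  refine lt_of_pow_lt_pow_left₀ 2 hε.le ?_
  nlinarith
end
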